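/- Let R be a ring and X a chain complex of left R-modules with a filtration (F^p)_{p∈ℤ}. Fix p, q ∈ ℤ and set n = p + q. If there exists r₀ ≥ 1 such that H_{n−1}(F^{p−r₀}) = 0, then (⋂_{r≥0} I^r_{p,q}) + F^{p−1}_n = (Ker ∂_n ∩ F^p_n) + F^{p−1}_n as submodules of X_n. -/

import Mathlib

/-!
Cycles of `F^p` lie in every `I^r`, so it suffices to bound a single `I^{r₀}` from above. If
`x ∈ I^{r₀}`, then `∂x` is a cycle of `F^{p-r₀}`; as `H_{n-1}(F^{p-r₀}) = 0`, it is `∂y` for some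
`y ∈ F^{p-r₀}_n ≤ F^{p-1}_n`, and `x = (x - y) + y` with `x - y` a cycle of `F^p`. In
terms of submodules, `∂ I^{r₀} ≤ ∂ F^{p-1}_n` means `I^{r₀} ≤ F^{p-1}_n + Ker ∂_n`, and the modular
law allows intersecting the right-hand side with `F^p_n`.
-/

open Submodule

variable {R : Type*} [Ring R]

section FiltrationSetup

variable (X : ℤ → Type*) [∀ n, AddCommGroup (X n)] [∀ n, Module R (X n)]

/-- The submodule `I^r_{p,q}` of `X_n` (where `n = p + q`):
`I^r_{p,q} = (∂_n)⁻¹(F^{p−r}_{n−1}) ∩ F^p_n`. -/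
def filtI (d : ∀ i j : ℤ, X i →ₗ[R] X j) (F : ℤ → ∀ n : ℤ, Submodule R (X n))
    (r p n : ℤ) : Submodule R (X n) :=
  Submodule.comap (d n (n - 1)) (F (p - r) (n - 1)) ⊓ F p n

/-- The submodule `J^r_{p,q}` of `X_n` (where `n = p + q`):
`J^r_{p,q} = ∂_{n+1}(F^{p+r−1}_{n+1}) ∩ F^p_n`. -/
def filtJ (d : ∀ i j : ℤ, X i →ₗ[R] X j) (F : ℤ → ∀ n : ℤ, Submodule R (X n))
    (r p n : ℤ) : Submodule R (X n) :=
  Submodule.map (d (n + 1) n) (F (p + r - 1) (n + 1)) ⊓ F p n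

/-- The `m`-th homology of a ℤ-indexed complex `(Y, e)` (with the homological-complex
convention `e i j : Y i →ₗ Y j`, nonzero only for `j = i − 1`):
`H_m = Ker(e m (m−1)) / Im(e (m+1) m)`. -/
abbrev homologyAt (Y : ℤ → Type*) [∀ n, AddCommGroup (Y n)] [∀ n, Module R (Y n)]
    (e : ∀ i j : ℤ, Y i →ₗ[R] Y j) (m : ℤ) :=
  ↥(LinearMap.ker (e m (m - 1))) ⧸
    Submodule.comap (LinearMap.ker (e m (m - 1))).subtype (LinearMap.range (e (m + 1) m))

variable (d : ∀ i j : ℤ, X i →ₗ[R] X j) (F : ℤ → ∀ n : ℤ, Submodule R (X n))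
variable (hsub : ∀ p i j : ℤ, ∀ x : X i, x ∈ F p i → d i j x ∈ F p j)

/-- The differentials of the subcomplex `F^p`, given by restricting those of `X`. -/
def subD (p i j : ℤ) : ↥(F p i) →ₗ[R] ↥(F p j) :=
  (d i j).restrict (fun x hx => hsub p i j x hx)

/-- The inclusion `Ker(∂_n^{F^p}) → Ker(∂_n^X)`. -/
def inclKer (p n : ℤ) :
    ↥(LinearMap.ker (subD X d F hsub p n (n - 1))) →ₗ[R] ↥(LinearMap.ker (d n (n - 1))) :=
  LinearMap.codRestrict _
    ((F p n).subtype.comp (LinearMap.ker (subD X d F hsub p n (n - 1))).subtype)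
    (fun x => by
      have hx : subD X d F hsub p n (n - 1) x.1 = 0 := x.2
      have h' : d n (n - 1) (x.1 : X n) = 0 := congrArg Subtype.val hx
      simpa [LinearMap.mem_ker] using h')

/-- The map `H_n(ι^p) : H_n(F^p) → H_n(X)` induced on homology by the inclusion
`ι^p : F^p → X`. -/
def homologyMapIncl (p n : ℤ) :
    homologyAt (fun m => ↥(F p m)) (subD X d F hsub p) n →ₗ[R] homologyAt X d n :=
  Submodule.mapQ _ _ (inclKer X d F hsub p n)
    (by
      rintro x ⟨y, hy⟩
      exact ⟨(y : X (n + 1)), congrArg Subtype.val hy⟩)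

end FiltrationSetup

section Filtration

variable {X : ℤ → Type*} [∀ n, AddCommGroup (X n)] [∀ n, Module R (X n)]
  {d : ∀ i j : ℤ, X i →ₗ[R] X j} {F : ℤ → ∀ n : ℤ, Submodule R (X n)}

theorem subsingleton_homologyAt_iff {m : ℤ} :
    Subsingleton (homologyAt X d m) ↔
      LinearMap.ker (d m (m - 1)) ≤ LinearMap.range (d (m + 1) m) := by
  rw [homologyAt, Submodule.Quotient.subsingleton_iff, comap_subtype_eq_top]

theorem subsingleton_homologyAt_subD_iff
    {hsub : ∀ p i j : ℤ, ∀ x : X i, x ∈ F p i → d i j x ∈ F p j} {p m : ℤ} :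
    Subsingleton (homologyAt (fun k => ↥(F p k)) (subD X d F hsub p) m) ↔
      F p m ⊓ LinearMap.ker (d m (m - 1)) ≤ map (d (m + 1) m) (F p (m + 1)) := by
  rw [subsingleton_homologyAt_iff, subD, subD, LinearMap.ker_restrict,
    LinearMap.range_restrict, ← map_le_iff_le_comap, map_comap_subtype]

theorem range_inf_le_map_of_subsingleton_homologyAt
    {hsub : ∀ p i j : ℤ, ∀ x : X i, x ∈ F p i → d i j x ∈ F p j} {p n : ℤ}
    (hdd : LinearMap.range (d n (n - 1)) ≤ LinearMap.ker (d (n - 1) (n - 1 - 1)))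
    (h : Subsingleton (homologyAt (fun k => ↥(F p k)) (subD X d F hsub p) (n - 1))) :
    LinearMap.range (d n (n - 1)) ⊓ F p (n - 1) ≤ map (d n (n - 1)) (F p n) := by
  have hcycles := subsingleton_homologyAt_subD_iff.mp h
  rw [sub_add_cancel] at hcycles
  exact (le_inf inf_le_right (inf_le_left.trans hdd)).trans hcycles

theorem map_filtI (r p n : ℤ) :
    map (d n (n - 1)) (filtI X d F r p n) =
      map (d n (n - 1)) (F p n) ⊓ F (p - r) (n - 1) := by
  rw [filtI, inf_comm, map_inf_eq_map_inf_comap]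

theorem ker_inf_le_filtI (r p n : ℤ) :
    LinearMap.ker (d n (n - 1)) ⊓ F p n ≤ filtI X d F r p n :=
  inf_le_inf_right _ (LinearMap.ker_le_comap _)

theorem filtI_sup_eq_ker_inf_sup {r p n : ℤ} {A : Submodule R (X n)} (hA : A ≤ F p n)
    (hd : map (d n (n - 1)) (F p n) ⊓ F (p - r) (n - 1) ≤ map (d n (n - 1)) A) :
    filtI X d F r p n ⊔ A = LinearMap.ker (d n (n - 1)) ⊓ F p n ⊔ A := by
  refine le_antisymm (sup_le ?_ le_sup_right) (sup_le_sup_right (ker_inf_le_filtI r p n) A)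
  have hle : filtI X d F r p n ≤ A ⊔ LinearMap.ker (d n (n - 1)) :=
    (LinearMap.map_le_map_iff _).mp ((map_filtI r p n).trans_le hd)
  calc
    filtI X d F r p n ≤ (A ⊔ LinearMap.ker (d n (n - 1))) ⊓ F p n := le_inf hle inf_le_right
    _ = A ⊔ LinearMap.ker (d n (n - 1)) ⊓ F p n := sup_inf_assoc_of_le _ hA
    _ = LinearMap.ker (d n (n - 1)) ⊓ F p n ⊔ A := sup_comm _ _

end Filtration

/-- Let `R` be a ring and `X` a chain complex of left `R`-modules with a
filtration `(F p)ₚ` by subcomplexes.  Fix `p q : ℤ` and set `n = p + q`.  If there exists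
`r₀ ≥ 1` with `H_{n−1}(F^{p−r₀}) = 0`, then
`(⋂_{r≥0} I^r_{p,q}) + F^{p−1}_n = (Ker ∂_n ∩ F^p_n) + F^{p−1}_n` as submodules of `X_n`. -/
theorem iInf_filtI_sup_eq
    (X : ℤ → Type*) [∀ n, AddCommGroup (X n)] [∀ n, Module R (X n)]
    (d : ∀ i j : ℤ, X i →ₗ[R] X j)
    (hshape : ∀ i j : ℤ, j ≠ i - 1 → d i j = 0)
    (hdd : ∀ i j k : ℤ, ∀ x : X i, d j k (d i j x) = 0)
    (F : ℤ → ∀ n : ℤ, Submodule R (X n))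
    (hmono : ∀ p n : ℤ, F (p - 1) n ≤ F p n)
    (hsub : ∀ p i j : ℤ, ∀ x : X i, x ∈ F p i → d i j x ∈ F p j)
    (p q : ℤ)
    (hvanish : ∃ r₀ : ℤ, 1 ≤ r₀ ∧
      Subsingleton (homologyAt (fun m => ↥(F (p - r₀) m)) (subD X d F hsub (p - r₀))
        (p + q - 1))) :
    (⨅ r : ℕ, filtI X d F (r : ℤ) p (p + q)) ⊔ F (p - 1) (p + q)
      = (LinearMap.ker (d (p + q) (p + q - 1)) ⊓ F p (p + q)) ⊔ F (p - 1) (p + q) := by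
  obtain ⟨r₀, hr₀, hs⟩ := hvanish
  lift r₀ to ℕ using by lia
  have hF : F (p - r₀) (p + q) ≤ F (p - 1) (p + q) :=
    monotone_int_of_le_succ (f := fun s => F s (p + q))
      (fun s => by simpa only [add_sub_cancel_right] using hmono (s + 1) (p + q)) (by lia)
  have hdd' : LinearMap.range (d (p + q) (p + q - 1)) ≤
      LinearMap.ker (d (p + q - 1) (p + q - 1 - 1)) :=
    LinearMap.range_le_ker_iff.mpr (LinearMap.ext (hdd _ _ _))
  have hfiltI : filtI X d F r₀ p (p + q) ⊔ F (p - 1) (p + q) =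
      LinearMap.ker (d (p + q) (p + q - 1)) ⊓ F p (p + q) ⊔ F (p - 1) (p + q) :=
    filtI_sup_eq_ker_inf_sup (hmono p (p + q)) <| calc
      _ ≤ LinearMap.range (d (p + q) (p + q - 1)) ⊓ F (p - r₀) (p + q - 1) :=
        inf_le_inf_right _ LinearMap.map_le_range
      _ ≤ map (d (p + q) (p + q - 1)) (F (p - r₀) (p + q)) :=
        range_inf_le_map_of_subsingleton_homologyAt hdd' hs
      _ ≤ map (d (p + q) (p + q - 1)) (F (p - 1) (p + q)) := map_mono hF
  refine le_antisymm ?_ (sup_le_sup_right (le_iInf fun r => ?_) _)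
  · exact (sup_le_sup_right (iInf_le _ r₀) _).trans hfiltI.le
  · exact ker_inf_le_filtI r p (p + q)
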